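/- Let A be the minimum DFA recognizing a language L ⊆ Σ* that is Wheeler with respect to an ordered alphabet (Σ,≺), and let n be the number of states of A. Then every equivalence class of the relation ≡^c_L on Pref(L) contains a word of length strictly less than n + n². -/

import Mathlib

/-!
Common framework: words over an ordered alphabet, co-lexicographic order,
(partial) DFAs and NFAs, Wheeler automata and Wheeler languages,
following "Ordering regular languages: a danger zone".
-/

namespace WheelerPaper

/-- Strict co-lexicographic order on words: compare the reverses lexicographically. -/
def Colex {A : Type} [LinearOrder A] (x y : List A) : Prop :=
  List.Lex (· < ·) x.reverse y.reverse

/-- Non-strict co-lexicographic order. -/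
def ColexLE {A : Type} [LinearOrder A] (x y : List A) : Prop :=
  Colex x y ∨ x = y

/-- Right context `α⁻¹L` of a word `α` with respect to a language `L`. -/
def rc {A : Type} (L : Set (List A)) (α : List A) : Set (List A) :=
  {γ | α ++ γ ∈ L}

/-- `Pref L`: the set of prefixes of words of `L`. -/
def Pref {A : Type} (L : Set (List A)) : Set (List A) :=
  {α | ∃ β, α ++ β ∈ L}

/-- `wpow γ i` is `γ^i`, the `i`-fold concatenation of the word `γ`. -/
def wpow {A : Type} (γ : List A) : ℕ → List A
  | 0 => []
  | n + 1 => γ ++ wpow γ n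

/-- A DFA with a possibly partial transition function. -/
structure PDFA (A : Type) (Q : Type) where
  init : Q
  trans : Q → A → Option Q
  accept : Q → Prop

/-- Extended (partial) transition function of a `PDFA`. -/
def PDFA.evalFrom {A Q : Type} (M : PDFA A Q) : Q → List A → Option Q
  | q, [] => some q
  | q, a :: w => (M.trans q a).bind fun q' => PDFA.evalFrom M q' w

/-- The language accepted by a `PDFA`. -/
def PDFA.accepts {A Q : Type} (M : PDFA A Q) : Set (List A) :=
  {w | ∃ q, M.evalFrom M.init w = some q ∧ M.accept q}

/-- A `PDFA` is trim if every state is reachable from the initial state and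
every state can reach some accepting state. -/
def PDFA.Trim {A Q : Type} (M : PDFA A Q) : Prop :=
  (∀ q : Q, ∃ α, M.evalFrom M.init α = some q) ∧
  (∀ q : Q, ∃ α q', M.evalFrom q α = some q' ∧ M.accept q')

/-- `r` is a Wheeler order for the DFA `M`: a strict total order on states whose
minimum is the initial state, the initial state has no incoming transitions, and
the two Wheeler conditions hold. -/
def IsWheelerOrder {A Q : Type} [LinearOrder A] (M : PDFA A Q) (r : Q → Q → Prop) : Prop :=
  IsStrictTotalOrder Q r ∧
  (∀ q : Q, q ≠ M.init → r M.init q) ∧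
  (∀ (q : Q) (a : A), M.trans q a ≠ some M.init) ∧
  (∀ (u₁ : Q) (a₁ : A) (v₁ : Q) (u₂ : Q) (a₂ : A) (v₂ : Q),
     M.trans u₁ a₁ = some v₁ → M.trans u₂ a₂ = some v₂ →
     (a₁ < a₂ → r v₁ v₂) ∧ (a₁ = a₂ → r u₁ u₂ → (r v₁ v₂ ∨ v₁ = v₂)))

/-- A language is Wheeler (w.r.t. the given order on the alphabet) if it is
recognized by some Wheeler DFA. -/
def IsWheelerLang {A : Type} [LinearOrder A] (L : Set (List A)) : Prop :=
  ∃ (n : ℕ) (M : PDFA A (Fin n)) (r : Fin n → Fin n → Prop),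
    IsWheelerOrder M r ∧ M.accepts = L

/-- A language is regular if it is recognized by some finite-state (partial) DFA. -/
def IsRegular {A : Type} (L : Set (List A)) : Prop :=
  ∃ (k : ℕ) (M : PDFA A (Fin k)), M.accepts = L

/-- The input-consistent convex refinement `≡^c_L` of the Myhill–Nerode
equivalence: same right context, same last character (or both empty), and every
word of `Pref L` co-lexicographically between the two words has the same right
context. -/
def EquivC {A : Type} [LinearOrder A] (L : Set (List A)) (α β : List A) : Prop :=
  rc L α = rc L β ∧ α.getLast? = β.getLast? ∧
  ∀ γ ∈ Pref L,
    ((ColexLE α γ ∧ ColexLE γ β) ∨ (ColexLE β γ ∧ ColexLE γ α)) →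
    rc L γ = rc L α

/-- An NFA with a single initial state. -/
structure NFA' (A : Type) (Q : Type) where
  init : Q
  trans : Q → A → Set Q
  accept : Q → Prop

/-- One step of an `NFA'` on a set of states. -/
def NFA'.stepSet {A Q : Type} (M : NFA' A Q) (S : Set Q) (a : A) : Set Q :=
  {q | ∃ p ∈ S, q ∈ M.trans p a}

/-- Extended transition function of an `NFA'` on sets of states. -/
def NFA'.evalFrom {A Q : Type} (M : NFA' A Q) : Set Q → List A → Set Q
  | S, [] => S
  | S, a :: w => NFA'.evalFrom M (M.stepSet S a) w

/-- The language accepted by an `NFA'`. -/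
def NFA'.accepts {A Q : Type} (M : NFA' A Q) : Set (List A) :=
  {w | ∃ q ∈ M.evalFrom {M.init} w, M.accept q}

/-- An `NFA'` is trim if every state is reachable from the initial state and
every state can reach some accepting state. -/
def NFA'.Trim {A Q : Type} (M : NFA' A Q) : Prop :=
  (∀ q : Q, ∃ α, q ∈ M.evalFrom {M.init} α) ∧
  (∀ q : Q, ∃ α, ∃ q' ∈ M.evalFrom {q} α, M.accept q')

/-- `r` is a Wheeler order for the NFA `M`. -/
def IsWheelerNFAOrder {A Q : Type} [LinearOrder A] (M : NFA' A Q) (r : Q → Q → Prop) : Prop :=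
  IsStrictTotalOrder Q r ∧
  (∀ q : Q, q ≠ M.init → r M.init q) ∧
  (∀ (q : Q) (a : A), M.init ∉ M.trans q a) ∧
  (∀ (u₁ : Q) (a₁ : A) (v₁ : Q) (u₂ : Q) (a₂ : A) (v₂ : Q),
     v₁ ∈ M.trans u₁ a₁ → v₂ ∈ M.trans u₂ a₂ →
     (a₁ < a₂ → r v₁ v₂) ∧ (a₁ = a₂ → r u₁ u₂ → (r v₁ v₂ ∨ v₁ = v₂)))

/-- `I` is an interval with respect to the strict order `r`. -/
def IsIntervalRel {Q : Type} (r : Q → Q → Prop) (I : Set Q) : Prop :=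
  ∀ x y z : Q, (r x y ∨ x = y) → (r y z ∨ y = z) → x ∈ I → z ∈ I → y ∈ I

/-- The class of star-free languages: built from `∅`, `{ε}` and the singletons
`{a}` by union, concatenation and complement. -/
inductive StarFree {A : Type} : Set (List A) → Prop
  | empty : StarFree ∅
  | eps : StarFree {[]}
  | single (a : A) : StarFree {[a]}
  | union {L₁ L₂ : Set (List A)} : StarFree L₁ → StarFree L₂ → StarFree (L₁ ∪ L₂)
  | concat {L₁ L₂ : Set (List A)} : StarFree L₁ → StarFree L₂ →
      StarFree {w | ∃ u v, u ∈ L₁ ∧ v ∈ L₂ ∧ w = u ++ v}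
  | compl {L : Set (List A)} : StarFree L → StarFree Lᶜ


/-- The language of all words over the sub-alphabet `S`. -/
def wordsOver {A : Type} (S : Set A) : Language A := {w | ∀ x ∈ w, x ∈ S}


section Statement3

/-- State reached from the initial state. -/
def PDFA.run {A Q : Type} (M : PDFA A Q) (w : List A) : Option Q := M.evalFrom M.init w

theorem PDFA.evalFrom_append {A Q : Type} (M : PDFA A Q) (a b : List A) (q : Q) :
    M.evalFrom q (a ++ b) = (M.evalFrom q a).bind fun p => M.evalFrom p b := by
  induction a generalizing q with
  | nil => simp [PDFA.evalFrom]
  | cons c a ih =>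
    simp only [List.cons_append, PDFA.evalFrom]
    cases M.trans q c with
    | none => rfl
    | some p => simpa using ih p

theorem PDFA.run_append {A Q : Type} (M : PDFA A Q) (a b : List A) :
    M.run (a ++ b) = (M.run a).bind fun p => M.evalFrom p b := M.evalFrom_append a b _

theorem PDFA.run_congr {A Q : Type} (M : PDFA A Q) {a b : List A} (h : M.run a = M.run b)
    (c : List A) : M.run (a ++ c) = M.run (b ++ c) := by
  rw [M.run_append, M.run_append, h]

theorem PDFA.mem_congr {A Q : Type} (M : PDFA A Q) {a b : List A} (h : M.run a = M.run b) :
    a ∈ M.accepts ↔ b ∈ M.accepts := by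
  unfold PDFA.run at h
  simp [PDFA.accepts, h]

theorem PDFA.rc_congr {A Q : Type} (M : PDFA A Q) {a b : List A} (h : M.run a = M.run b) :
    rc M.accepts a = rc M.accepts b := by
  ext c
  exact M.mem_congr (M.run_congr h c)

theorem PDFA.pref_congr {A Q : Type} (M : PDFA A Q) {a b : List A} (h : M.run a = M.run b)
    (ha : a ∈ Pref M.accepts) : b ∈ Pref M.accepts := by
  obtain ⟨c, hc⟩ := ha
  exact ⟨c, (M.mem_congr (M.run_congr h c)).1 hc⟩

theorem pref_of_append {A : Type} {L : Set (List A)} {a b : List A} (h : a ++ b ∈ Pref L) :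
    a ∈ Pref L := by
  obtain ⟨c, hc⟩ := h
  exact ⟨b ++ c, by simpa using hc⟩

theorem PDFA.run_of_pref {A Q : Type} (M : PDFA A Q) {a : List A} (ha : a ∈ Pref M.accepts) :
    ∃ q, M.run a = some q := by
  obtain ⟨c, q, hq, -⟩ := ha
  rw [M.evalFrom_append] at hq
  obtain ⟨p, hp, -⟩ := Option.bind_eq_some_iff.1 hq
  exact ⟨p, hp⟩

theorem PDFA.run_wpow {A Q : Type} (M : PDFA A Q) {a b : List A} (h : M.run (a ++ b) = M.run a)
    (k : ℕ) : M.run (a ++ wpow b k) = M.run a := by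
  induction k with
  | zero => simp [wpow]
  | succ k ih =>
    rw [wpow, ← List.append_assoc, M.run_congr h, ih]

theorem wpow_length {A : Type} (b : List A) (k : ℕ) : (wpow b k).length = k * b.length := by
  induction k with
  | zero => simp [wpow]
  | succ k ih => simp [wpow, ih]; ring

theorem colexLE_iff {A : Type} [LinearOrder A] (x y : List A) :
    ColexLE x y ↔ x.reverse ≤ y.reverse := by
  rw [le_iff_lt_or_eq, List.reverse_inj]
  exact Iff.rfl

theorem cons_le_iff {A : Type} [LinearOrder A] (c d : A) (x y : List A) :
    c :: x ≤ d :: y ↔ c < d ∨ c = d ∧ x ≤ y := by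
  rw [le_iff_lt_or_eq, le_iff_lt_or_eq, List.cons_lt_cons_iff, List.cons.injEq]
  tauto

theorem nil_le' {A : Type} [LinearOrder A] (x : List A) : [] ≤ x := by
  rw [← not_lt]
  exact List.not_lt_nil x

theorem not_cons_le_nil {A : Type} [LinearOrder A] (c : A) (x : List A) : ¬ c :: x ≤ [] := by
  rw [not_le]
  exact List.nil_lt_cons c x

theorem append_le_iff {A : Type} [LinearOrder A] (a x y : List A) :
    a ++ x ≤ a ++ y ↔ x ≤ y := by
  induction a with
  | nil => simp
  | cons c a ih => simp [cons_le_iff, ih]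

theorem between_split {A : Type} [LinearOrder A] (a x y l : List A)
    (h1 : a ++ x ≤ l) (h2 : l ≤ a ++ y) : ∃ l', l = a ++ l' := by
  induction a generalizing l with
  | nil => exact ⟨l, rfl⟩
  | cons c a ih =>
    cases l with
    | nil => exact absurd h1 (not_cons_le_nil _ _)
    | cons d l =>
      simp only [List.cons_append, cons_le_iff] at h1 h2
      have hcd : c = d := by
        rcases h1 with h1 | h1
        · rcases h2 with h2 | h2
          · exact absurd h2 (lt_asymm h1)
          · exact h2.1.symm
        · exact h1.1
      subst hcd
      simp only [lt_irrefl, false_or, true_and] at h1 h2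
      obtain ⟨l', rfl⟩ := ih l h1 h2
      exact ⟨l', rfl⟩

/-- A short word lies on one side of all extensions of a longer one. -/
theorem side {A : Type} [LinearOrder A] (s y : List A) (h : y.length < s.length) :
    (∀ t, y ≤ s ++ t) ∨ (∀ t, s ++ t ≤ y) := by
  induction s generalizing y with
  | nil => simp at h
  | cons c s ih =>
    cases y with
    | nil => left; intro t; exact nil_le' _
    | cons d y =>
      simp only [List.cons_append, cons_le_iff]
      rcases lt_trichotomy c d with hcd | hcd | hcd
      · right; intro t; exact Or.inl hcd
      · subst hcd
        rcases ih y (by simpa using h) with h | h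
        · left; intro t; exact Or.inr ⟨rfl, h t⟩
        · right; intro t; exact Or.inr ⟨rfl, h t⟩
      · left; intro t; exact Or.inl hcd

theorem wheeler_mono {A Q : Type} [LinearOrder A] (D : PDFA A Q) (r : Q → Q → Prop)
    (hD : IsWheelerOrder D r) (a b : List A) (X Y : Q) (ha : D.run a.reverse = some X)
    (hb : D.run b.reverse = some Y) (hab : a ≤ b) : r X Y ∨ X = Y := by
  obtain ⟨-, hinit, -, hw⟩ := hD
  have key : ∀ (c : A) (l : List A) (Z : Q), D.run (c :: l).reverse = some Z →
      ∃ Z', D.run l.reverse = some Z' ∧ D.trans Z' c = some Z := by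
    intro c l Z h
    rw [List.reverse_cons, D.run_append] at h
    obtain ⟨p, hp, h⟩ := Option.bind_eq_some_iff.1 h
    refine ⟨p, hp, ?_⟩
    simpa [PDFA.evalFrom] using h
  induction a generalizing b X Y with
  | nil =>
    simp [PDFA.run, PDFA.evalFrom] at ha
    subst ha
    by_cases h : Y = D.init
    · exact Or.inr h.symm
    · exact Or.inl (hinit _ h)
  | cons c a ih =>
    cases b with
    | nil => exact absurd hab (not_cons_le_nil _ _)
    | cons d b =>
      obtain ⟨X', hX', hX⟩ := key _ _ _ ha
      obtain ⟨Y', hY', hY⟩ := key _ _ _ hb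
      have := hw _ _ _ _ _ _ hX hY
      rcases (cons_le_iff _ _ _ _).1 hab with h | ⟨rfl, h⟩
      · exact Or.inl (this.1 h)
      · rcases ih b X' Y' hX' hY' h with h | rfl
        · exact this.2 rfl h
        · right
          exact Option.some.inj (hX.symm.trans hY)

theorem core {A : Type} [LinearOrder A] (L : Set (List A)) {n : ℕ} (M : PDFA A (Fin n))
    (hacc : M.accepts = L) (hW : IsWheelerLang L) (s g t w : List A)
    (hst : M.run s = M.run t) (hw : n ^ 2 ≤ w.length)
    (h1 : s.reverse ≤ g.reverse) (h2 : g.reverse ≤ t.reverse)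
    (hs : s ++ w ∈ Pref L) (hg : g ++ w ∈ Pref L) : rc L (g ++ w) = rc L (s ++ w) := by
  by_contra hne
  obtain ⟨N, D, r, hD, hDL⟩ := hW
  subst hacc
  have prefTake : ∀ (x : List A) (i : ℕ), x ++ w ∈ Pref M.accepts →
      ∃ q, M.run (x ++ w.take i) = some q := by
    intro x i hx
    apply M.run_of_pref
    apply pref_of_append (b := w.drop i)
    simpa using hx
  choose P hP using fun i : ℕ => prefTake s i hs
  choose R hR using fun i : ℕ => prefTake g i hg
  obtain ⟨i, j, hij, hPR⟩ : ∃ i j : Fin (n ^ 2 + 1), i < j ∧ (P i, R i) = (P j, R j) := by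
    obtain ⟨i, j, hij, h⟩ := Fintype.exists_ne_map_eq_of_card_lt
      (fun i : Fin (n ^ 2 + 1) => (P i, R i)) (by simp [sq])
    rcases lt_or_gt_of_ne hij with h' | h'
    · exact ⟨i, j, h', h⟩
    · exact ⟨j, i, h', h.symm⟩
  obtain ⟨i, hi⟩ := i
  obtain ⟨j, hj⟩ := j
  simp only [Fin.mk_lt_mk, Prod.mk.injEq] at hij hPR
  obtain ⟨hPij, hRij⟩ := hPR
  set w1 := w.take i with hw1
  set w2 := (w.take j).drop i with hw2
  set w3 := w.drop j with hw3
  have hw12 : w1 ++ w2 = w.take j := by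
    have := List.take_append_drop i (w.take j)
    rwa [List.take_take, min_eq_left hij.le] at this
  have hw123 : w1 ++ w2 ++ w3 = w := by rw [hw12, List.take_append_drop]
  have hw2len : 0 < w2.length := by
    simp [hw2]; omega
  have hsl : M.run (s ++ w1 ++ w2) = M.run (s ++ w1) := by
    rw [List.append_assoc, hw12, hP j, hP i, hPij]
  have hgl : M.run (g ++ w1 ++ w2) = M.run (g ++ w1) := by
    rw [List.append_assoc, hw12, hR j, hR i, hRij]
  have htl : M.run (t ++ w1 ++ w2) = M.run (t ++ w1) := by
    rw [List.append_assoc, ← M.run_congr hst, ← List.append_assoc, hsl, M.run_congr hst]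
  have full : ∀ x : List A, M.run (x ++ w1 ++ w2) = M.run (x ++ w1) → ∀ k,
      M.run (x ++ w1 ++ wpow w2 k ++ w3) = M.run (x ++ w) := by
    intro x hx k
    rw [M.run_congr ((M.run_wpow hx k).trans hx.symm)]
    simp only [List.append_assoc] at hw123 ⊢
    rw [hw123]
  have ht : t ++ w ∈ Pref M.accepts := M.pref_congr (M.run_congr hst w) hs
  have dst : ∀ x : List A, x ++ w ∈ Pref M.accepts → M.run (x ++ w1 ++ w2) = M.run (x ++ w1) →
      ∀ k, ∃ q, D.run (x ++ w1 ++ wpow w2 k) = some q := by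
    intro x hx hl k
    apply D.run_of_pref
    rw [hDL]
    apply pref_of_append (b := w3)
    exact M.pref_congr (full x hl k).symm hx
  choose X hX using dst s hs hsl
  choose Y hY using dst g hg hgl
  choose Z hZ using dst t ht htl
  have hrc : rc M.accepts (t ++ w) = rc M.accepts (s ++ w) :=
    M.rc_congr (M.run_congr hst w).symm
  have rcne : ∀ x y : List A, M.run (x ++ w1 ++ w2) = M.run (x ++ w1) →
      M.run (y ++ w1 ++ w2) = M.run (y ++ w1) → rc M.accepts (x ++ w) ≠ rc M.accepts (y ++ w) →
      ∀ k, D.run (x ++ w1 ++ wpow w2 k) ≠ D.run (y ++ w1 ++ wpow w2 k) := by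
    intro x y hx hy hxy k h
    apply hxy
    rw [← M.rc_congr (full x hx k), ← M.rc_congr (full y hy k), ← hDL]
    exact D.rc_congr (D.run_congr h w3)
  have hXY : ∀ k, X k ≠ Y k := by
    intro k h
    apply rcne g s hgl hsl hne k
    rw [hX, hY, h]
  have hYZ : ∀ k, Y k ≠ Z k := by
    intro k h
    apply rcne g t hgl htl (by rw [hrc]; exact hne) k
    rw [hZ, hY, h]
  have mono : ∀ (a b : List A) (p q : Fin N), D.run a = some p → D.run b = some q →
      a.reverse ≤ b.reverse → r p q ∨ p = q := by
    intro a b p q ha hb hab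
    exact wheeler_mono D r hD a.reverse b.reverse p q (by simpa using ha) (by simpa using hb) hab
  have hXYr : ∀ k, r (X k) (Y k) := by
    intro k
    refine (mono _ _ _ _ (hX k) (hY k) ?_).resolve_right (hXY k)
    simpa [append_le_iff] using h1
  have hYZr : ∀ k, r (Y k) (Z k) := by
    intro k
    refine (mono _ _ _ _ (hY k) (hZ k) ?_).resolve_right (hYZ k)
    simpa [append_le_iff] using h2
  obtain ⟨q, hq⟩ := Finite.exists_infinite_fiber Y
  have hinf : (Y ⁻¹' {q}).Infinite := Set.infinite_coe_iff.1 hq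
  obtain ⟨k, hk⟩ := hinf.nonempty
  obtain ⟨m, hm, hlt⟩ := hinf.exists_gt (g ++ w1 ++ wpow w2 k).length
  have hYk : Y k = Y m := by
    have a : Y k = q := hk
    have b : Y m = q := hm
    rw [a, b]
  have hST := hD.1
  have irr : ∀ a, ¬ r a a := fun a => hST.toIrrefl.irrefl a
  have tr : ∀ a b c, r a b → r b c → r a c := fun a b c => hST.toIsTrans.trans a b c
  rcases side (wpow w2 m).reverse (g ++ w1 ++ wpow w2 k).reverse (by
    rw [List.length_reverse, List.length_reverse, wpow_length]
    nlinarith) with h | h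
  · have := mono _ _ _ _ (hY k) (hX m) (by
      have := h (s ++ w1).reverse
      rwa [← List.reverse_append] at this)
    have h3 := hXYr m
    rw [← hYk] at h3
    rcases this with h4 | h4
    · exact irr _ (tr _ _ _ h3 h4)
    · rw [← h4] at h3; exact irr _ h3
  · have := mono _ _ _ _ (hZ m) (hY k) (by
      have := h (t ++ w1).reverse
      rwa [← List.reverse_append] at this)
    have h3 := hYZr m
    rw [← hYk] at h3
    rcases this with h4 | h4
    · exact irr _ (tr _ _ _ h3 h4)
    · rw [h4] at h3; exact irr _ h3

theorem equivC_trans {A : Type} [LinearOrder A] {L : Set (List A)} {a b c : List A}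
    (h1 : EquivC L a b) (h2 : EquivC L b c) : EquivC L a c := by
  obtain ⟨r1, l1, b1⟩ := h1
  obtain ⟨r2, l2, b2⟩ := h2
  refine ⟨r1.trans r2, l1.trans l2, ?_⟩
  intro g hg h
  have B1 := b1 g hg
  have B2 := b2 g hg
  rw [← r1] at B2
  simp only [colexLE_iff] at h B1 B2
  rcases le_total g.reverse b.reverse with h' | h' <;> rcases h with h | h
  · exact B1 (Or.inl ⟨h.1, h'⟩)
  · exact B2 (Or.inr ⟨h.1, h'⟩)
  · exact B2 (Or.inl ⟨h', h.2⟩)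
  · exact B1 (Or.inr ⟨h', h.2⟩)

theorem shorten {A : Type} [LinearOrder A] (L : Set (List A)) {n : ℕ} (M : PDFA A (Fin n))
    (hacc : M.accepts = L) (hW : IsWheelerLang L) (α : List A) (hα : α ∈ Pref L)
    (hlen : n + n ^ 2 ≤ α.length) : ∃ β ∈ Pref L, EquivC L β α ∧ β.length < α.length := by
  have hn : 0 < n := M.init.pos
  have hn2 : 0 < n ^ 2 := by positivity
  have ex : ∀ i : ℕ, ∃ q, M.run (α.take i) = some q := by
    intro i
    apply M.run_of_pref
    rw [hacc]
    apply pref_of_append (b := α.drop i)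
    simpa using hα
  choose P hP using ex
  obtain ⟨i, j, hij, hj, hPR⟩ : ∃ i j : ℕ, i < j ∧ j ≤ n ∧ P i = P j := by
    obtain ⟨i, j, hij, h⟩ := Fintype.exists_ne_map_eq_of_card_lt
      (fun i : Fin (n + 1) => P i) (by simp)
    rcases lt_or_gt_of_ne hij with h' | h'
    · exact ⟨i, j, h', by omega, h⟩
    · exact ⟨j, i, h', by omega, h.symm⟩
  set u := α.take i with hu
  set v := α.take j with hv
  set w := α.drop j with hw
  have hvw : v ++ w = α := List.take_append_drop _ _
  have hwlen : n ^ 2 ≤ w.length := by simp [hw]; omega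
  have huv : M.run u = M.run v := by rw [hP i, hP j, hPR]
  have hul : u.length < v.length := by simp [hu, hv]; omega
  rw [← hvw] at hα ⊢
  have hr := M.run_congr huv w
  have hβ : u ++ w ∈ Pref L := by
    rw [← hacc] at hα ⊢
    exact M.pref_congr hr.symm hα
  have hrc : rc L (u ++ w) = rc L (v ++ w) := by
    rw [← hacc]; exact M.rc_congr hr
  refine ⟨u ++ w, hβ, ⟨hrc, ?_, ?_⟩, by simpa using hul⟩
  · have : w ≠ [] := by
      intro h; rw [h] at hwlen; simp at hwlen; omega
    rw [List.getLast?_append_of_ne_nil _ this, List.getLast?_append_of_ne_nil _ this]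
  · have main : ∀ s t γ : List A, M.run s = M.run t → s ++ w ∈ Pref L → γ ∈ Pref L →
        (s ++ w).reverse ≤ γ.reverse → γ.reverse ≤ (t ++ w).reverse →
        rc L γ = rc L (s ++ w) := by
      intro s t γ hst hs hγ h1 h2
      rw [List.reverse_append] at h1 h2
      obtain ⟨l, hl⟩ := between_split _ _ _ _ h1 h2
      have hγ' : γ = l.reverse ++ w := by
        rw [← List.reverse_inj, hl]; simp
      rw [hl, append_le_iff] at h1 h2
      subst hγ'
      exact core L M hacc hW s l.reverse t w hst hwlen (by simpa using h1) (by simpa using h2) hs hγ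
    intro γ hγ h
    simp only [colexLE_iff] at h
    rcases h with h | h
    · exact main u v γ huv hβ hγ h.1 h.2
    · rw [hrc]
      exact main v u γ huv.symm hα hγ h.1 h.2

/-- Lemma 2 of the paper: every `≡^c_L`-class of prefixes of
a Wheeler language contains a word of length `< n + n²`, where `n` is the
number of states of the minimum DFA for `L`. -/
theorem statement3 {A : Type} [Fintype A] [LinearOrder A]
    (L : Set (List A)) {n : ℕ} (M : PDFA A (Fin n))
    (hacc : M.accepts = L)
    (hmin : ∀ (m : ℕ) (M' : PDFA A (Fin m)), M'.accepts = L → n ≤ m)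
    (hW : IsWheelerLang L) :
    ∀ α ∈ Pref L, ∃ β ∈ Pref L, EquivC L β α ∧ β.length < n + n ^ 2 := by
  intro α
  induction hk : α.length using Nat.strong_induction_on generalizing α with
  | _ k ih =>
    intro hα
    by_cases hlt : α.length < n + n ^ 2
    · refine ⟨α, hα, ⟨rfl, rfl, ?_⟩, hlt⟩
      intro γ _ h
      simp only [colexLE_iff, or_self] at h
      have := le_antisymm h.1 h.2
      rw [List.reverse_inj.1 this]
    · obtain ⟨β, hβ, he, hl⟩ := shorten L M hacc hW α hα (not_lt.1 hlt)
      obtain ⟨β', hβ', he', hl'⟩ := ih β.length (hk ▸ hl) β rfl hβ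
      exact ⟨β', hβ', equivC_trans he' he, hl'⟩

end Statement3

end WheelerPaper
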